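/- arXiv:2307.15722 — 5 statements merged into one kernel-verified Lean document; each statement's English description precedes it below -/
import Mathlib

section
/- Let α, β ∈ ℝ and let q : ℝ × ℝ → ℂ be three times continuously differentiable in x and continuously differentiable in t (with all the mixed partial derivatives appearing below continuous). Then the zero-curvature equation ∂_t X − ∂_x T + XT − TX = 0 holds at every point (x,t) and for every spectral parameter k ∈ ℂ if and only if q satisfies the defocusing Hirota equation i q_t + α(q_xx − 2(|q|² − 1)q) + i β(q_xxx − 6|q|² q_x) = 0 at every point (x,t). -/
/-!
Writing `u` for the slice `q(·, t)`, every matrix in the Lax pair is an explicit polynomial in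
`k`, `u`, `u'`, `u''` and their conjugates. When the commutator `[X, T]` is added to
`X_t - T_x`, all positive powers of `k` and all diagonal entries cancel, leaving the off-diagonal
matrix with entries `-i H` and `conj (-i H)`, where `H` is the left-hand side of the Hirota
equation (`zeroCurvature_eq`). The curvature therefore vanishes for all `k` exactly when `H = 0`.
-/

open Matrix

/-- Entrywise derivative of a 2×2 matrix-valued function of a real variable. -/
noncomputable def matDeriv (F : ℝ → Matrix (Fin 2) (Fin 2) ℂ) (x : ℝ) :
    Matrix (Fin 2) (Fin 2) ℂ :=
  Matrix.of fun i j => deriv (fun s => F s i j) x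

noncomputable def sigma3 : Matrix (Fin 2) (Fin 2) ℂ := !![1, 0; 0, -1]

/-- Q(x,t) = [[0, q],[conj q, 0]] -/
noncomputable def Qmat (q : ℝ → ℝ → ℂ) (x t : ℝ) : Matrix (Fin 2) (Fin 2) ℂ :=
  !![0, q x t; (starRingEnd ℂ) (q x t), 0]

/-- X = i k σ₃ + Q -/
noncomputable def Xmat (q : ℝ → ℝ → ℂ) (k : ℂ) (x t : ℝ) : Matrix (Fin 2) (Fin 2) ℂ :=
  (Complex.I * k) • sigma3 + Qmat q x t

/-- T_NLS = −2k X + i σ₃ (Q_x − Q² + I) -/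
noncomputable def TNLS (q : ℝ → ℝ → ℂ) (k : ℂ) (x t : ℝ) : Matrix (Fin 2) (Fin 2) ℂ :=
  (-(2 * k)) • Xmat q k x t
    + Complex.I • (sigma3 * (matDeriv (fun s => Qmat q s t) x - (Qmat q x t) ^ 2 + 1))

/-- T_CMKdV = −2k (T_NLS − i σ₃) + (Q_x Q − Q Q_x) + 2Q³ − Q_xx -/
noncomputable def TCMKdV (q : ℝ → ℝ → ℂ) (k : ℂ) (x t : ℝ) : Matrix (Fin 2) (Fin 2) ℂ :=
  (-(2 * k)) • (TNLS q k x t - Complex.I • sigma3)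
    + (matDeriv (fun s => Qmat q s t) x * Qmat q x t
        - Qmat q x t * matDeriv (fun s => Qmat q s t) x)
    + (2 : ℂ) • (Qmat q x t) ^ 3
    - matDeriv (fun s => matDeriv (fun u => Qmat q u t) s) x

/-- T = α T_NLS + β T_CMKdV -/
noncomputable def Tmat (q : ℝ → ℝ → ℂ) (α β : ℝ) (k : ℂ) (x t : ℝ) :
    Matrix (Fin 2) (Fin 2) ℂ :=
  (α : ℂ) • TNLS q k x t + (β : ℂ) • TCMKdV q k x t

open ComplexConjugate

lemma deriv_conj_comp (f : ℝ → ℂ) (x : ℝ) :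
    deriv (fun s => conj (f s)) x = conj (deriv f x) :=
  deriv.star (𝕜 := ℝ) (f := f) (x := x)

lemma HasDerivAt.conj_comp {f : ℝ → ℂ} {f' : ℂ} {x : ℝ} (h : HasDerivAt f f' x) :
    HasDerivAt (fun s => conj (f s)) (conj f') x :=
  h.star

lemma matDeriv_offDiag (f : ℝ → ℂ) (x : ℝ) :
    matDeriv (fun s => !![0, f s; conj (f s), 0]) x
      = !![0, deriv f x; conj (deriv f x), 0] := by
  ext i j
  fin_cases i <;> fin_cases j <;> simp [matDeriv, deriv_conj_comp]

lemma matDeriv_Qmat (q : ℝ → ℝ → ℂ) (x t : ℝ) :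
    matDeriv (fun s => Qmat q s t) x
      = !![0, deriv (fun s => q s t) x; conj (deriv (fun s => q s t) x), 0] :=
  matDeriv_offDiag (fun s => q s t) x

lemma matDeriv_matDeriv_Qmat (q : ℝ → ℝ → ℂ) (x t : ℝ) :
    matDeriv (fun s => matDeriv (fun u => Qmat q u t) s) x
      = !![0, deriv (deriv (fun s => q s t)) x;
          conj (deriv (deriv (fun s => q s t)) x), 0] := by
  simp_rw [matDeriv_Qmat]
  exact matDeriv_offDiag (deriv (fun s => q s t)) x

/-- The matrix `T` as a polynomial expression in independent variables standing for
`q, q_x, q_xx` (`a, b, c`) and their conjugates (`a', b', c'`). -/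
noncomputable def Tpoly (α β k a b c a' b' c' : ℂ) : Matrix (Fin 2) (Fin 2) ℂ :=
  !![α * (-2 * Complex.I * k ^ 2 + Complex.I * (1 - a * a'))
        + β * (4 * Complex.I * k ^ 3 + 2 * Complex.I * k * (a * a') + (b * a' - a * b')),
     α * (-2 * k * a + Complex.I * b)
        + β * (4 * k ^ 2 * a - 2 * Complex.I * k * b + 2 * a ^ 2 * a' - c);
     α * (-2 * k * a' - Complex.I * b')
        + β * (4 * k ^ 2 * a' + 2 * Complex.I * k * b' + 2 * a * a' ^ 2 - c'),
     -(α * (-2 * Complex.I * k ^ 2 + Complex.I * (1 - a * a'))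
        + β * (4 * Complex.I * k ^ 3 + 2 * Complex.I * k * (a * a') + (b * a' - a * b')))]

lemma Tmat_eq (q : ℝ → ℝ → ℂ) (α β : ℝ) (k : ℂ) (x t : ℝ) :
    Tmat q α β k x t = Tpoly α β k (q x t) (deriv (fun s => q s t) x)
      (deriv (deriv (fun s => q s t)) x) (conj (q x t)) (conj (deriv (fun s => q s t) x))
      (conj (deriv (deriv (fun s => q s t)) x)) := by
  simp only [Tmat, TCMKdV, TNLS, Xmat]
  rw [matDeriv_matDeriv_Qmat, matDeriv_Qmat]
  ext i j
  fin_cases i <;> fin_cases j <;>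
    simp [Tpoly, Qmat, sigma3, pow_succ, Matrix.one_fin_two, -mul_eq_mul_left_iff] <;> ring

lemma matDeriv_Xmat (q : ℝ → ℝ → ℂ) (k : ℂ) (x t : ℝ) :
    matDeriv (fun s => Xmat q k x s) t
      = !![0, deriv (fun s => q x s) t; conj (deriv (fun s => q x s) t), 0] := by
  ext i j
  fin_cases i <;> fin_cases j <;> simp [matDeriv, Xmat, Qmat, sigma3, deriv_conj_comp]

/-- The product rule on each entry of `T`, with `a` and `a'` treated as independent functions;
`d` and `d'` stand for `q_xxx` and its conjugate. -/
lemma matDeriv_Tpoly (α β k : ℂ) {a b c a' b' c' : ℝ → ℂ} {d d' : ℂ} {x : ℝ}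
    (ha : HasDerivAt a (b x) x) (hb : HasDerivAt b (c x) x) (hc : HasDerivAt c d x)
    (ha' : HasDerivAt a' (b' x) x) (hb' : HasDerivAt b' (c' x) x) (hc' : HasDerivAt c' d' x) :
    matDeriv (fun s => Tpoly α β k (a s) (b s) (c s) (a' s) (b' s) (c' s)) x =
      !![α * (-Complex.I * (b x * a' x + a x * b' x))
          + β * (2 * Complex.I * k * (b x * a' x + a x * b' x) + (c x * a' x - a x * c' x)),
        α * (-2 * k * b x + Complex.I * c x)
          + β * (4 * k ^ 2 * b x - 2 * Complex.I * k * c x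
            + 4 * a x * b x * a' x + 2 * a x ^ 2 * b' x - d);
        α * (-2 * k * b' x - Complex.I * c' x)
          + β * (4 * k ^ 2 * b' x + 2 * Complex.I * k * c' x
            + 2 * b x * a' x ^ 2 + 4 * a x * a' x * b' x - d'),
        -(α * (-Complex.I * (b x * a' x + a x * b' x))
          + β * (2 * Complex.I * k * (b x * a' x + a x * b' x) + (c x * a' x - a x * c' x)))] := by
  have haa := ha.mul ha'
  have h00 := ((((haa.const_sub 1).const_mul Complex.I).const_add
      (-2 * Complex.I * k ^ 2)).const_mul α).add
    ((((haa.const_mul (2 * Complex.I * k)).const_add (4 * Complex.I * k ^ 3)).add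
      ((hb.mul ha').sub (ha.mul hb'))).const_mul β)
  have h01 := (((ha.const_mul (-2 * k)).add (hb.const_mul Complex.I)).const_mul α).add
    (((((ha.const_mul (4 * k ^ 2)).sub (hb.const_mul (2 * Complex.I * k))).add
      (((ha.pow 2).const_mul 2).mul ha')).sub hc).const_mul β)
  have h10 := (((ha'.const_mul (-2 * k)).sub (hb'.const_mul Complex.I)).const_mul α).add
    (((((ha'.const_mul (4 * k ^ 2)).add (hb'.const_mul (2 * Complex.I * k))).add
      ((ha.const_mul 2).mul (ha'.pow 2))).sub hc').const_mul β)
  ext i j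
  fin_cases i <;> fin_cases j
  · refine h00.deriv.trans ?_
    simp
    ring
  · refine h01.deriv.trans ?_
    simp [-mul_eq_mul_left_iff]
    ring
  · refine h10.deriv.trans ?_
    simp [-mul_eq_mul_left_iff]
    ring
  · refine h00.neg.deriv.trans ?_
    simp
    ring

/-- Left-hand side of the defocusing Hirota equation. -/
noncomputable def hirota (α β : ℝ) (q : ℝ → ℝ → ℂ) (x t : ℝ) : ℂ :=
  Complex.I * deriv (fun s => q x s) t
    + (α : ℂ) * (deriv (deriv (fun s => q s t)) x
        - 2 * (q x t * conj (q x t) - 1) * q x t)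
    + Complex.I * (β : ℂ) * (deriv (deriv (deriv (fun s => q s t))) x
        - 6 * (q x t * conj (q x t)) * deriv (fun s => q s t) x)

/-- The curvature is independent of `k` and off-diagonal, and its entries are the Hirota expression
times `-i` and the conjugate of that. -/
lemma zeroCurvature_eq (α β : ℝ) (q : ℝ → ℝ → ℂ) (x t : ℝ) (k : ℂ)
    (hx : ContDiff ℝ 3 (fun x => q x t)) :
    matDeriv (fun s => Xmat q k x s) t - matDeriv (fun s => Tmat q α β k s t) x
        + Xmat q k x t * Tmat q α β k x t - Tmat q α β k x t * Xmat q k x t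
      = !![0, -Complex.I * hirota α β q x t; conj (-Complex.I * hirota α β q x t), 0] := by
  have hd0 : Differentiable ℝ (fun s => q s t) := hx.differentiable (by norm_num)
  have hx1 : ContDiff ℝ 2 (deriv (fun s => q s t)) :=
    (contDiff_succ_iff_deriv (n := 2).1 (by norm_num; exact hx)).2.2
  have hd1 : Differentiable ℝ (deriv (fun s => q s t)) := hx1.differentiable (by norm_num)
  have hx2 : ContDiff ℝ 1 (deriv (deriv (fun s => q s t))) :=
    (contDiff_succ_iff_deriv (n := 1).1 (by norm_num; exact hx1)).2.2
  have hd2 : Differentiable ℝ (deriv (deriv (fun s => q s t))) :=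
    hx2.differentiable (by norm_num)
  have ha := (hd0 x).hasDerivAt
  have hb := (hd1 x).hasDerivAt
  have hc := (hd2 x).hasDerivAt
  have hT := matDeriv_Tpoly α β k ha hb hc ha.conj_comp hb.conj_comp hc.conj_comp
  simp only [Tmat_eq, matDeriv_Xmat]
  rw [hT]
  ext i j
  fin_cases i <;> fin_cases j <;>
    simp [Tpoly, Xmat, Qmat, sigma3, hirota, map_ofNat] <;>
    ring_nf <;> simp <;> ring

/-- The zero-curvature equation ∂_t X − ∂_x T + XT − TX = 0 holds for all (x,t) and all
spectral parameters k if and only if q solves the defocusing Hirota equation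
i q_t + α(q_xx − 2(|q|²−1)q) + iβ(q_xxx − 6|q|² q_x) = 0. -/
theorem zero_curvature_iff_hirota (α β : ℝ) (q : ℝ → ℝ → ℂ)
    (hx : ∀ t : ℝ, ContDiff ℝ 3 (fun x => q x t))
    (ht : ∀ x : ℝ, ContDiff ℝ 1 (fun t => q x t)) :
    (∀ (x t : ℝ) (k : ℂ),
        matDeriv (fun s => Xmat q k x s) t - matDeriv (fun s => Tmat q α β k s t) x
          + Xmat q k x t * Tmat q α β k x t - Tmat q α β k x t * Xmat q k x t = 0)
    ↔ (∀ x t : ℝ,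
        Complex.I * deriv (fun s => q x s) t
          + (α : ℂ) * (deriv (deriv (fun s => q s t)) x
              - 2 * (q x t * (starRingEnd ℂ) (q x t) - 1) * q x t)
          + Complex.I * (β : ℂ) * (deriv (deriv (deriv (fun s => q s t))) x
              - 6 * (q x t * (starRingEnd ℂ) (q x t)) * deriv (fun s => q s t) x) = 0) := by
  change _ ↔ ∀ x t : ℝ, hirota α β q x t = 0
  constructor
  · intro h x t
    have h0 := h x t 0
    rw [zeroCurvature_eq α β q x t 0 (hx t)] at h0
    have h01 := congrFun (congrFun h0 0) 1
    simpa using h01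
  · intro h x t k
    rw [zeroCurvature_eq α β q x t k (hx t), h x t]
    ext i j
    fin_cases i <;> fin_cases j <;> simp
end

section
/- Let ξ < −8 and define f : ℂ∖{0} → ℂ by f(z) = (1/2)(z − 1/z)·(ξ + (z + 1/z)² + 2 − (z + 1/z)). Then the set { z ∈ ℝ : z ≠ 0 and f′(z) = 0 } consists of exactly four points ξ₁ > ξ₂ > ξ₃ > ξ₄, and these satisfy ξ₄ < −1 < ξ₃ < 0 < ξ₂ < 1 < ξ₁, together with ξ₁·ξ₂ = 1 and ξ₃·ξ₄ = 1. -/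
/-!
With `s = z + 1/z` and `u = z - 1/z` one has `s' = u/z`, `u' = s/z` and `u² = s² - 4`, so that
`2 z f'(z) = p(s)` with the cubic `p(s) = 3s³ - 2s² + (ξ - 6)s + 4`. For `ξ < -8`,
`p(-2) = -16 - 2ξ > 0`, `p(0) = 4 > 0` and `p(2) = 8 + 2ξ < 0`, so the three roots of `p` are
`a < -2`, `c ∈ (0, 2)` and `b > 2` (`exists_cubic_roots`). A real `z ≠ 0` has `|z + 1/z| ≥ 2`,
which excludes `c`. Each of `a`, `b` is attained by exactly two values of `z`, inverse to each
other.
-/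

/-- The phase function of the defocusing Hirota equation with α = β = 1. -/
noncomputable def phase (ξ : ℝ) (z : ℂ) : ℂ :=
  (1 / 2) * (z - 1 / z) * ((ξ : ℂ) + (z + 1 / z) ^ 2 + 2 - (z + 1 / z))

/-- The derivative of the phase in terms of the cubic in `s = z + 1/z`. -/
lemma deriv_phase (ξ : ℝ) (z : ℂ) (hz : z ≠ 0) :
    deriv (phase ξ) z = 1 / (2 * z) *
      (3 * (z + 1 / z) ^ 3 - 2 * (z + 1 / z) ^ 2 + ((ξ : ℂ) - 6) * (z + 1 / z) + 4) := by
  have hi : HasDerivAt (fun w : ℂ => 1 / w) (-(z ^ 2)⁻¹) z := by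
    simpa [one_div] using hasDerivAt_inv hz
  have hs : HasDerivAt (fun w : ℂ => w + 1 / w) (1 + -(z ^ 2)⁻¹) z := (hasDerivAt_id z).add hi
  have hu : HasDerivAt (fun w : ℂ => w - 1 / w) (1 - -(z ^ 2)⁻¹) z := (hasDerivAt_id z).sub hi
  have h := (hu.const_mul (1 / 2 : ℂ)).mul ((((hs.pow 2).const_add (ξ : ℂ)).add_const 2).sub hs)
  have h' : HasDerivAt (phase ξ) _ z := h
  rw [h'.deriv]
  simp only [Pi.pow_apply, Pi.sub_apply, Nat.add_one_sub_one, pow_one,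
    Nat.cast_ofNat]
  field_simp
  ring

lemma deriv_phase_eq_zero_iff (ξ z : ℝ) (hz : z ≠ 0) :
    deriv (phase ξ) (z : ℂ) = 0 ↔
      3 * (z + 1 / z) ^ 3 - 2 * (z + 1 / z) ^ 2 + (ξ - 6) * (z + 1 / z) + 4 = 0 := by
  have hz' : (z : ℂ) ≠ 0 := by exact_mod_cast hz
  have hz2 : (1 : ℂ) / (2 * z) ≠ 0 := by simp [hz]
  rw [deriv_phase ξ z hz', mul_eq_zero, or_iff_right hz2]
  norm_cast

lemma exists_cubic_roots (ξ : ℝ) (hξ : ξ < -8) :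
    ∃ a b c : ℝ, a < -2 ∧ 2 < b ∧ 0 < c ∧ c < 2 ∧
      ∀ s : ℝ, 3 * s ^ 3 - 2 * s ^ 2 + (ξ - 6) * s + 4 = 3 * ((s - a) * (s - b) * (s - c)) := by
  set p : ℝ → ℝ := fun s => 3 * s ^ 3 - 2 * s ^ 2 + (ξ - 6) * s + 4 with hp
  have hc : Continuous p := by fun_prop
  have hξ2 : 0 < (-ξ - 8) * (-ξ - 8) := mul_pos (by linarith) (by linarith)
  have hξ3 : 0 ≤ ξ ^ 2 * (-ξ - 8) := mul_nonneg (sq_nonneg ξ) (by linarith)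
  -- `ξ` and `-ξ` serve as the outer endpoints: `p ξ < 0 < p (-ξ)`.
  obtain ⟨a, ⟨-, ha2⟩, ha⟩ : (0 : ℝ) ∈ p '' Set.Ioo ξ (-2) := by
    refine intermediate_value_Ioo (by linarith) hc.continuousOn ⟨?_, ?_⟩
    · simp only [hp]; nlinarith [sq_nonneg ξ, hξ2, hξ3]
    · simp only [hp]; linarith
  obtain ⟨b, ⟨hb2, -⟩, hb⟩ : (0 : ℝ) ∈ p '' Set.Ioo 2 (-ξ) := by
    refine intermediate_value_Ioo (by linarith) hc.continuousOn ⟨?_, ?_⟩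
    · simp only [hp]; linarith
    · simp only [hp]; nlinarith [sq_nonneg ξ, hξ2, hξ3]
  obtain ⟨c, ⟨hc0, hc2⟩, hc'⟩ : (0 : ℝ) ∈ p '' Set.Ioo 0 2 := by
    refine intermediate_value_Ioo' (by norm_num) hc.continuousOn ⟨?_, ?_⟩
    · simp only [hp]; linarith
    · simp [hp]
  refine ⟨a, b, c, ha2, hb2, hc0, hc2, fun s => ?_⟩
  simp only [hp] at ha hb hc'
  -- Divided differences of `p` at its three distinct roots give Vieta's relations.
  have h1 : 3 * (a ^ 2 + a * b + b ^ 2) - 2 * (a + b) + ξ - 6 = 0 := by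
    apply mul_left_cancel₀ (show a - b ≠ 0 by linarith)
    linear_combination ha - hb
  have h2 : 3 * (a ^ 2 + a * c + c ^ 2) - 2 * (a + c) + ξ - 6 = 0 := by
    apply mul_left_cancel₀ (show a - c ≠ 0 by linarith)
    linear_combination ha - hc'
  have h3 : 3 * (a + b + c) - 2 = 0 := by
    apply mul_left_cancel₀ (show b - c ≠ 0 by linarith)
    linear_combination h1 - h2
  linear_combination ha + (s - a) * h1 + (s - a) * (s - b) * h3

lemma exists_add_inv_eq (b : ℝ) (hb : 2 < b) : ∃ r : ℝ, 1 < r ∧ r + 1 / r = b := by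
  have hr : 1 < (b + √(b ^ 2 - 4)) / 2 := by linarith [Real.sqrt_nonneg (b ^ 2 - 4)]
  have hq : √(b ^ 2 - 4) ^ 2 = b ^ 2 - 4 := Real.sq_sqrt (by nlinarith)
  refine ⟨_, hr, ?_⟩
  have h0 : (b + √(b ^ 2 - 4)) ≠ 0 := by linarith
  field_simp
  linear_combination hq

lemma add_inv_eq_iff {z r : ℝ} (hz : z ≠ 0) (hr : r ≠ 0) :
    z + 1 / z = r + 1 / r ↔ z = r ∨ z = 1 / r := by
  have h : z + 1 / z - (r + 1 / r) = (z - r) * (z - 1 / r) / z := by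
    field_simp
    ring
  rw [← sub_eq_zero, h, div_eq_zero_iff, or_iff_left hz, mul_eq_zero, sub_eq_zero, sub_eq_zero]

lemma add_inv_not_mem_Ioo {z c : ℝ} (hz : z ≠ 0) (hc0 : 0 < c) (hc2 : c < 2) :
    z + 1 / z ≠ c := by
  intro h
  have h' : z ^ 2 + 1 = c * z := by
    rw [← h]
    field_simp
  nlinarith [sq_nonneg (z - c / 2)]

/-- For ξ < −8 the real stationary phase points are exactly four points
ξ₄ < −1 < ξ₃ < 0 < ξ₂ < 1 < ξ₁, with ξ₁ξ₂ = 1 and ξ₃ξ₄ = 1. -/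
theorem stationary_points_case1 (ξ : ℝ) (hξ : ξ < -8) :
    ∃ ξ₁ ξ₂ ξ₃ ξ₄ : ℝ,
      ξ₄ < -1 ∧ -1 < ξ₃ ∧ ξ₃ < 0 ∧ 0 < ξ₂ ∧ ξ₂ < 1 ∧ 1 < ξ₁ ∧
      ξ₁ * ξ₂ = 1 ∧ ξ₃ * ξ₄ = 1 ∧
      {z : ℝ | z ≠ 0 ∧ deriv (phase ξ) (z : ℂ) = 0} = {ξ₁, ξ₂, ξ₃, ξ₄} := by
  obtain ⟨a, b, c, ha, hb, hc0, hc2, hroots⟩ := exists_cubic_roots ξ hξ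
  obtain ⟨r, hr, hrb⟩ := exists_add_inv_eq b hb
  obtain ⟨q, hq, hqa⟩ := exists_add_inv_eq (-a) (by linarith)
  have hr0 : 0 < r := by linarith
  have hq0 : 0 < q := by linarith
  have hr1 : 1 / r < 1 := (div_lt_one hr0).2 hr
  have hq1 : 1 / q < 1 := (div_lt_one hq0).2 hq
  have hri : 0 < 1 / r := by positivity
  have hqi : 0 < 1 / q := by positivity
  have hqa' : a = -q + 1 / (-q) := by
    rw [one_div_neg_eq_neg_one_div]
    linarith
  refine ⟨r, 1 / r, -(1 / q), -q, by linarith, by linarith, by linarith, hri, hr1, hr,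
    by field_simp, by field_simp, ?_⟩
  ext z
  simp only [Set.mem_ofPred_eq, Set.mem_insert_iff, Set.mem_singleton_iff]
  have key : ∀ hz : z ≠ 0, deriv (phase ξ) (z : ℂ) = 0 ↔
      (z = r ∨ z = 1 / r ∨ z = -(1 / q) ∨ z = -q) := by
    intro hz
    have hzc := add_inv_not_mem_Ioo hz hc0 hc2
    rw [deriv_phase_eq_zero_iff ξ z hz, hroots, mul_eq_zero, mul_eq_zero, mul_eq_zero,
      sub_eq_zero, sub_eq_zero, sub_eq_zero, ← hrb, hqa', add_inv_eq_iff hz hr0.ne',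
      add_inv_eq_iff hz (neg_ne_zero.2 hq0.ne'), one_div_neg_eq_neg_one_div]
    have h3 : (3 : ℝ) ≠ 0 := by norm_num
    tauto
  constructor
  · rintro ⟨hz, h⟩
    exact (key hz).1 h
  · intro h
    have hz : z ≠ 0 := by
      rcases h with h | h | h | h <;> intro h0 <;> linarith
    exact ⟨hz, (key hz).2 h⟩
end

section
/- Let ξ = −4 and define f : ℂ∖{0} → ℂ by f(z) = (1/2)(z − 1/z)·(ξ + (z + 1/z)² + 2 − (z + 1/z)). Then the set { z ∈ ℝ : z ≠ 0 and f′(z) = 0 } consists of exactly one point, namely z = 1. -/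
lemma hasDerivAt_phase_neg_four {z : ℂ} (hz : z ≠ 0) :
    HasDerivAt (phase (-4))
      ((z - 1) ^ 2 * (3 * z ^ 4 + 4 * z ^ 3 + 4 * z ^ 2 + 4 * z + 3) / (2 * z ^ 4)) z := by
  have hi : HasDerivAt (fun w : ℂ => 1 / w) (-(z ^ 2)⁻¹) z := by
    simpa using hasDerivAt_inv hz
  have hu := (hasDerivAt_id z).add hi
  have hv := (hasDerivAt_id z).sub hi
  have h := (hv.const_mul (1 / 2 : ℂ)).mul
    ((((hu.pow 2).const_add (((-4 : ℝ) : ℂ))).add_const 2).sub hu)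
  refine h.congr_deriv ?_
  simp
  field_simp
  ring

/-- For ξ = −4 the unique real stationary phase point is z = 1. -/
theorem stationary_points_case4 :
    {z : ℝ | z ≠ 0 ∧ deriv (phase (-4)) (z : ℂ) = 0} = {1} := by
  ext z
  simp only [Set.mem_ofPred_eq, Set.mem_singleton_iff]
  constructor
  · rintro ⟨hz, hd⟩
    have hzc : (z : ℂ) ≠ 0 := by exact_mod_cast hz
    rw [(hasDerivAt_phase_neg_four hzc).deriv, div_eq_zero_iff] at hd
    have hnum := hd.resolve_right (by simp [hz])
    have hreal : (z - 1) ^ 2 * (3 * z ^ 4 + 4 * z ^ 3 + 4 * z ^ 2 + 4 * z + 3) = 0 := by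
      exact_mod_cast hnum
    have hpos : 0 < 3 * z ^ 4 + 4 * z ^ 3 + 4 * z ^ 2 + 4 * z + 3 := by
      have hq : 0 < z ^ 2 + z + 1 := by nlinarith [sq_nonneg (z + 1 / 2)]
      have hsum : 3 * z ^ 4 + 4 * z ^ 3 + 4 * z ^ 2 + 4 * z + 3
          = 2 * (z ^ 2 + z + 1) ^ 2 + (z ^ 2 - 1) ^ 2 := by ring
      rw [hsum]
      positivity
    have hsq := (mul_eq_zero.mp hreal).resolve_right hpos.ne'
    exact sub_eq_zero.mp (pow_eq_zero_iff two_ne_zero |>.mp hsq)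
  · rintro rfl
    refine ⟨one_ne_zero, ?_⟩
    rw [(hasDerivAt_phase_neg_four (by simp)).deriv]
    simp
end

section
/- Let ξ > −4 and define f : ℂ∖{0} → ℂ by f(z) = (1/2)(z − 1/z)·(ξ + (z + 1/z)² + 2 − (z + 1/z)). Then there is no real z ≠ 0 with f′(z) = 0. -/
lemma hasDerivAt_phase (ξ : ℝ) {z : ℂ} (hz : z ≠ 0) :
    HasDerivAt (phase ξ)
      ((((ξ : ℂ) + 4) * (z + 1 / z)
        + (z + 1 / z - 2) * (3 * (z + 1 / z) ^ 2 + 4 * (z + 1 / z) - 2)) / (2 * z)) z := by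
  have hinv : HasDerivAt (fun y : ℂ => 1 / y) (-(z ^ 2)⁻¹) z := by
    simpa using hasDerivAt_inv hz
  have hu := (hasDerivAt_id' z).add hinv
  have hw := (hasDerivAt_id' z).sub hinv
  have h := (hw.const_mul (1 / 2 : ℂ)).mul
    ((((hu.pow 2).const_add (ξ : ℂ)).add_const 2).sub hu)
  refine h.congr_deriv ?_
  simp only [Pi.add_apply, Pi.sub_apply, Pi.pow_apply, Nat.reduceSub,
    pow_one, Nat.cast_ofNat]
  field_simp
  ring

lemma two_le_or_le_neg_two {z : ℝ} (hz : z ≠ 0) : 2 ≤ z + 1 / z ∨ z + 1 / z ≤ -2 := by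
  rcases hz.lt_or_gt with h | h
  · right
    have : z + 1 / z + 2 = (z + 1) ^ 2 / z := by field_simp; ring
    have := div_nonpos_of_nonneg_of_nonpos (sq_nonneg (z + 1)) h.le
    linarith
  · left
    have : z + 1 / z - 2 = (z - 1) ^ 2 / z := by field_simp; ring
    have : 0 ≤ (z - 1) ^ 2 / z := by positivity
    linarith

/-- For ξ > −4 there is no real stationary phase point. -/
theorem stationary_points_case5 (ξ : ℝ) (hξ : -4 < ξ) :
    ∀ z : ℝ, z ≠ 0 → deriv (phase ξ) (z : ℂ) ≠ 0 := by
  intro z hz hd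
  have hzc : (z : ℂ) ≠ 0 := by exact_mod_cast hz
  rw [(hasDerivAt_phase ξ hzc).deriv, div_eq_zero_iff,
    or_iff_left (mul_ne_zero two_ne_zero hzc)] at hd
  have hr : (ξ + 4) * (z + 1 / z)
      + (z + 1 / z - 2) * (3 * (z + 1 / z) ^ 2 + 4 * (z + 1 / z) - 2) = 0 := by
    exact_mod_cast hd
  have hu := two_le_or_le_neg_two hz
  generalize z + 1 / z = u at hr hu
  have hq : 0 < 3 * u ^ 2 + 4 * u - 2 := by rcases hu with h | h <;> nlinarith
  rcases hu with h | h
  · have h1 : 0 < (ξ + 4) * u := mul_pos (by linarith) (by linarith)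
    have h2 : 0 ≤ (u - 2) * (3 * u ^ 2 + 4 * u - 2) := mul_nonneg (by linarith) hq.le
    linarith
  · have h1 : (ξ + 4) * u < 0 := mul_neg_of_pos_of_neg (by linarith) (by linarith)
    have h2 : (u - 2) * (3 * u ^ 2 + 4 * u - 2) < 0 := mul_neg_of_neg_of_pos (by linarith) hq
    linarith
end

section
/- Let ξ < −8, define f : ℂ∖{0} → ℂ by f(z) = (1/2)(z − 1/z)·(ξ + (z + 1/z)² + 2 − (z + 1/z)), and let ξ₄ < −1 < ξ₃ < 0 < ξ₂ < 1 < ξ₁ be the four real stationary phase points (the real solutions of f′(z) = 0). Then (−1)^{k+1} f″(ξ_k) > 0 for k = 1,2,3,4; that is, f″(ξ₁) > 0, f″(ξ₂) < 0, f″(ξ₃) > 0 and f″(ξ₄) < 0. -/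
/-- The positive palindromic factor of `f''` at a stationary point. -/
def cofactor (x : ℝ) : ℝ := 3 * x ^ 6 - x ^ 5 + 9 * x ^ 4 - 4 * x ^ 3 + 9 * x ^ 2 - x + 3

lemma cofactor_pos (x : ℝ) : 0 < cofactor x := by
  have e : cofactor x = x ^ 4 * (3 * x ^ 2 - x + 1) + x ^ 2 * (8 * x ^ 2 - 4 * x + 1)
      + (8 * x ^ 2 - x + 3) := by
    unfold cofactor; ring
  have a : 0 < 3 * x ^ 2 - x + 1 := by nlinarith [sq_nonneg (6 * x - 1)]
  have b : 0 < 8 * x ^ 2 - 4 * x + 1 := by nlinarith [sq_nonneg (4 * x - 1)]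
  have d : 0 < 8 * x ^ 2 - x + 3 := by nlinarith [sq_nonneg (16 * x - 1)]
  rw [e]; positivity

lemma phase_hasDerivAt (ξ : ℝ) {z : ℂ} (hz : z ≠ 0) :
    HasDerivAt (phase ξ) ((1 / 2) * (3 * z ^ 2 - 2 * z + (ξ + 3) + (ξ + 3) * z⁻¹ ^ 2
      - 2 * z⁻¹ ^ 3 + 3 * z⁻¹ ^ 4)) z := by
  have hi := hasDerivAt_inv hz
  have hd := (((hasDerivAt_id z).sub hi).const_mul (1 / 2 : ℂ)).mul
    ((((((hasDerivAt_id z).add hi).pow 2).const_add (ξ : ℂ)).add_const 2).sub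
      ((hasDerivAt_id z).add hi))
  refine (hd.congr_of_eventuallyEq (Filter.Eventually.of_forall fun w => ?_)).congr_deriv ?_
  · simp [phase]
  · simp
    field_simp
    ring

lemma phase_deriv_hasDerivAt (ξ : ℝ) {z : ℂ} (hz : z ≠ 0) :
    HasDerivAt (deriv (phase ξ)) ((1 / 2) * (6 * z - 2 - 2 * (ξ + 3) * z⁻¹ ^ 3
      + 6 * z⁻¹ ^ 4 - 12 * z⁻¹ ^ 5)) z := by
  have hi := hasDerivAt_inv hz
  have hd := ((((((((hasDerivAt_id z).pow 2).const_mul 3).sub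
    ((hasDerivAt_id z).const_mul 2)).add_const ((ξ : ℂ) + 3)).add
    ((hi.pow 2).const_mul ((ξ : ℂ) + 3))).sub ((hi.pow 3).const_mul 2)).add
    ((hi.pow 4).const_mul 3)).const_mul (1 / 2 : ℂ)
  refine (hd.congr_of_eventuallyEq ?_).congr_deriv ?_
  · filter_upwards [isOpen_ne.mem_nhds hz] with w hw
    rw [(phase_hasDerivAt ξ hw).deriv]
    simp
  · simp
    field_simp
    ring

/-- The stationarity equation eliminates `ξ` from the second derivative. -/
lemma second_deriv_at_stationary (ξ : ℝ) {x : ℝ} (hx : x ≠ 0)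
    (h : deriv (phase ξ) (x : ℂ) = 0) :
    iteratedDeriv 2 (phase ξ) (x : ℂ)
      = (((x ^ 2 - 1) / x ^ 5 * (cofactor x / (x ^ 2 + 1)) : ℝ) : ℂ) := by
  have hz : (x : ℂ) ≠ 0 := by exact_mod_cast hx
  rw [(phase_hasDerivAt ξ hz).deriv] at h
  rw [iteratedDeriv_succ, iteratedDeriv_one, (phase_deriv_hasDerivAt ξ hz).deriv]
  have hp : (x : ℂ) ^ 2 + 1 ≠ 0 := by
    have : x ^ 2 + 1 ≠ 0 := by positivity
    exact_mod_cast this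
  unfold cofactor
  push_cast
  field_simp at h ⊢
  linear_combination (-2) * h

/-- For ξ < −8, at the four real stationary phase points ξ₄ < −1 < ξ₃ < 0 < ξ₂ < 1 < ξ₁
one has (−1)^{k+1} f″(ξ_k) > 0, i.e. f″(ξ₁) > 0, f″(ξ₂) < 0, f″(ξ₃) > 0, f″(ξ₄) < 0
(each second derivative being a real number). -/
theorem second_derivative_signs (ξ : ℝ) (hξ : ξ < -8) (ξ₁ ξ₂ ξ₃ ξ₄ : ℝ)
    (hord : ξ₄ < -1 ∧ -1 < ξ₃ ∧ ξ₃ < 0 ∧ 0 < ξ₂ ∧ ξ₂ < 1 ∧ 1 < ξ₁)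
    (h1 : deriv (phase ξ) (ξ₁ : ℂ) = 0) (h2 : deriv (phase ξ) (ξ₂ : ℂ) = 0)
    (h3 : deriv (phase ξ) (ξ₃ : ℂ) = 0) (h4 : deriv (phase ξ) (ξ₄ : ℂ) = 0) :
    ((iteratedDeriv 2 (phase ξ) (ξ₁ : ℂ)).im = 0 ∧ 0 < (iteratedDeriv 2 (phase ξ) (ξ₁ : ℂ)).re) ∧
    ((iteratedDeriv 2 (phase ξ) (ξ₂ : ℂ)).im = 0 ∧ (iteratedDeriv 2 (phase ξ) (ξ₂ : ℂ)).re < 0) ∧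
    ((iteratedDeriv 2 (phase ξ) (ξ₃ : ℂ)).im = 0 ∧ 0 < (iteratedDeriv 2 (phase ξ) (ξ₃ : ℂ)).re) ∧
    ((iteratedDeriv 2 (phase ξ) (ξ₄ : ℂ)).im = 0 ∧ (iteratedDeriv 2 (phase ξ) (ξ₄ : ℂ)).re < 0) := by
  obtain ⟨h4m, h3m, h30, h20, h21, h11⟩ := hord
  have hq : ∀ x : ℝ, 0 < cofactor x / (x ^ 2 + 1) := fun x =>
    div_pos (cofactor_pos x) (by positivity)
  rw [second_deriv_at_stationary ξ (by linarith) h1, second_deriv_at_stationary ξ h20.ne' h2,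
    second_deriv_at_stationary ξ h30.ne h3, second_deriv_at_stationary ξ (by linarith) h4]
  simp only [Complex.ofReal_im, Complex.ofReal_re, true_and]
  have odd5 : Odd 5 := by decide
  refine ⟨mul_pos (div_pos (by nlinarith) (by positivity)) (hq _),
    mul_neg_of_neg_of_pos (div_neg_of_neg_of_pos (by nlinarith) (by positivity)) (hq _),
    mul_pos (div_pos_of_neg_of_neg (by nlinarith) (odd5.pow_neg h30)) (hq _),
    mul_neg_of_neg_of_pos (div_neg_of_pos_of_neg (by nlinarith)
      (odd5.pow_neg (by linarith))) (hq _)⟩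
end
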